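/- arXiv:1602.06017 — 3 statements merged into one kernel-verified Lean document; each statement's English description precedes it below -/
import Mathlib

section
/- Let $G$ be a finite nilpotent group and let $G_1, \dots, G_k$ be its Sylow subgroups (one for each prime dividing $|G|$). Then $S(G) = \prod_{i=1}^k S(G_i)$. -/
/-- For a finite group `G`, `phiG G` is the number of elements of `G` whose order
equals the exponent of `G` (a group-theoretic generalization of Euler's totient). -/
noncomputable def phiG (G : Type*) [Group G] : ℕ :=
  Nat.card {a : G // orderOf a = Monoid.exponent G}

/-- `SG G` is the sum of `phiG H` over all subgroups `H` of `G`. -/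
noncomputable def SG (G : Type*) [Group G] : ℕ :=
  ∑ᶠ H : Subgroup G, phiG H

/-!
A finite nilpotent group is the direct product of its Sylow subgroups, which have pairwise coprime
exponents. In such a product `∏ M i`, the Chinese remainder theorem gives for each `i` an `n` such
that `x ↦ x ^ n` is the projection onto the `i`-th factor, so every subgroup is a product of
subgroups `H i ≤ M i`. Orders and exponents in `∏ H i` are least common multiples over the factors;
by coprimality, `x` has order equal to the exponent exactly when each `x i` does in `H i`.
Thus `phiG (∏ H i) = ∏ phiG (H i)`, and summing over all families `H` factors the sum.
-/

section Congruence

variable {G H : Type*} [Group G] [Group H]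

theorem phiG_congr (e : G ≃* H) : phiG G = phiG H :=
  Nat.card_congr <| e.toEquiv.subtypeEquiv fun a ↦ by
    change orderOf a = _ ↔ orderOf (e a) = _
    rw [MulEquiv.orderOf_eq, Monoid.exponent_eq_of_mulEquiv e]

theorem SG_congr (e : G ≃* H) : SG G = SG H :=
  finsum_eq_of_bijective e.mapSubgroup e.mapSubgroup.bijective fun K ↦
    phiG_congr (e.subgroupMap K)

end Congruence

theorem lcm_eq_lcm_iff_of_dvd_of_pairwise_coprime {ι : Type*} [Fintype ι] {a b : ι → ℕ}
    (hab : ∀ i, a i ∣ b i) (hb : Pairwise fun i j ↦ (b i).Coprime (b j)) :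
    Finset.univ.lcm a = Finset.univ.lcm b ↔ ∀ i, a i = b i := by
  classical
  refine ⟨fun h i ↦ (hab i).antisymm ?_, fun h ↦ by rw [funext h]⟩
  have hdvd : b i ∣ a i * ∏ j ∈ Finset.univ.erase i, a j := by
    rw [Finset.mul_prod_erase _ _ (Finset.mem_univ i)]
    calc b i ∣ Finset.univ.lcm b := Finset.dvd_lcm (Finset.mem_univ i)
      _ = Finset.univ.lcm a := h.symm
      _ ∣ ∏ j, a j := Finset.lcm_dvd_prod _ _
  have hcop : (b i).Coprime (∏ j ∈ Finset.univ.erase i, a j) :=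
    Nat.Coprime.prod_right fun j hj ↦
      (hb (Finset.ne_of_mem_erase hj).symm).coprime_dvd_right (hab j)
  exact hcop.dvd_of_dvd_mul_right hdvd

section CoprimeMonoids

variable {ι : Type*} [Finite ι] {M : ι → Type*} [∀ i, Monoid (M i)]

theorem orderOf_eq_exponent_pi_iff
    (hM : Pairwise fun i j ↦ (Monoid.exponent (M i)).Coprime (Monoid.exponent (M j)))
    (x : ∀ i, M i) :
    orderOf x = Monoid.exponent (∀ i, M i) ↔ ∀ i, orderOf (x i) = Monoid.exponent (M i) := by
  have := Fintype.ofFinite ι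
  rw [Pi.orderOf, Monoid.exponent_pi]
  exact lcm_eq_lcm_iff_of_dvd_of_pairwise_coprime (fun i ↦ Monoid.order_dvd_exponent (x i)) hM

theorem exists_forall_pow_eq_mulSingle [DecidableEq ι]
    (hM : Pairwise fun i j ↦ (Monoid.exponent (M i)).Coprime (Monoid.exponent (M j))) (i : ι) :
    ∃ n : ℕ, ∀ x : ∀ i, M i, x ^ n = Pi.mulSingle i (x i) := by
  have := Fintype.ofFinite ι
  have hcop : (Monoid.exponent (M i)).Coprime
      (∏ j ∈ Finset.univ.erase i, Monoid.exponent (M j)) :=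
    Nat.Coprime.prod_right fun j hj ↦ hM (Finset.ne_of_mem_erase hj).symm
  obtain ⟨n, hn_one, hn_zero⟩ := Nat.chineseRemainder hcop 1 0
  refine ⟨n, fun x ↦ funext fun j ↦ ?_⟩
  obtain rfl | hji := eq_or_ne j i
  · rw [Pi.pow_apply, Pi.mulSingle_eq_same, Monoid.pow_eq_mod_exponent, hn_one,
      ← Monoid.pow_eq_mod_exponent, pow_one]
  · have hdvd : Monoid.exponent (M j) ∣ n :=
      (Finset.dvd_prod_of_mem _ (Finset.mem_erase.2 ⟨hji, Finset.mem_univ j⟩)).trans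
        ((Nat.modEq_zero_iff_dvd).1 hn_zero)
    rw [Pi.pow_apply, Pi.mulSingle_eq_of_ne hji]
    exact Monoid.exponent_dvd_iff_forall_pow_eq_one.1 hdvd (x j)

end CoprimeMonoids

section ProductSubgroups

variable {ι : Type*} {M : ι → Type*} [∀ i, Group (M i)]

/-- The product of subgroups `H i`, as a subgroup of the product group, is isomorphic to the
product of the groups `H i`. -/
def subgroupPiMulEquiv (H : ∀ i, Subgroup (M i)) : Subgroup.pi Set.univ H ≃* ∀ i, H i where
  __ := Equiv.Set.univPi fun i ↦ (H i : Set (M i))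
  map_mul' _ _ := rfl

theorem map_evalMonoidHom_pi_univ (H : ∀ i, Subgroup (M i)) (i : ι) :
    (Subgroup.pi Set.univ H).map (Pi.evalMonoidHom M i) = H i := by
  classical
  refine le_antisymm (Subgroup.map_le_iff_le_comap.2 fun x hx ↦ hx i trivial) fun y hy ↦ ?_
  exact ⟨Pi.mulSingle i y, (Subgroup.mulSingle_mem_pi i y).2 fun _ ↦ hy, Pi.mulSingle_eq_same i y⟩

theorem pi_univ_map_evalMonoidHom [Finite ι]
    (hM : Pairwise fun i j ↦ (Monoid.exponent (M i)).Coprime (Monoid.exponent (M j)))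
    (K : Subgroup (∀ i, M i)) :
    (Subgroup.pi Set.univ fun i ↦ K.map (Pi.evalMonoidHom M i)) = K := by
  classical
  refine le_antisymm (Subgroup.pi_le_iff.2 fun i ↦ ?_)
    (Subgroup.le_pi_iff.2 fun i _ ↦ K.le_comap_map _)
  obtain ⟨n, hn⟩ := exists_forall_pow_eq_mulSingle hM i
  rintro _ ⟨_, ⟨x, hx, rfl⟩, rfl⟩
  change Pi.mulSingle i (x i) ∈ K
  exact hn x ▸ K.pow_mem hx n

/-- The bijection between families of subgroups `H i` of `M i` and subgroups of the product group,
when the finitely many groups `M i` have pairwise coprime exponents. -/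
def subgroupPiEquiv [Finite ι]
    (hM : Pairwise fun i j ↦ (Monoid.exponent (M i)).Coprime (Monoid.exponent (M j))) :
    (∀ i, Subgroup (M i)) ≃ Subgroup (∀ i, M i) where
  toFun := Subgroup.pi Set.univ
  invFun K i := K.map (Pi.evalMonoidHom M i)
  left_inv H := funext (map_evalMonoidHom_pi_univ H)
  right_inv := pi_univ_map_evalMonoidHom hM

variable [Fintype ι]

theorem phiG_pi
    (hM : Pairwise fun i j ↦ (Monoid.exponent (M i)).Coprime (Monoid.exponent (M j))) :
    phiG (∀ i, M i) = ∏ i, phiG (M i) := by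
  unfold phiG
  rw [← Nat.card_pi]
  exact Nat.card_congr <|
    (Equiv.subtypeEquivRight (orderOf_eq_exponent_pi_iff hM)).trans <|
      Equiv.subtypePiEquivPi (p := fun i (a : M i) ↦ orderOf a = Monoid.exponent (M i))

theorem phiG_subgroup_pi
    (hM : Pairwise fun i j ↦ (Monoid.exponent (M i)).Coprime (Monoid.exponent (M j)))
    (H : ∀ i, Subgroup (M i)) :
    phiG (Subgroup.pi Set.univ H) = ∏ i, phiG (H i) := by
  have hdvd (i : ι) : Monoid.exponent (H i) ∣ Monoid.exponent (M i) :=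
    Monoid.exponent_submonoid_dvd (H i).toSubmonoid
  rw [phiG_congr (subgroupPiMulEquiv H), phiG_pi fun i j hij ↦
    ((hM hij).coprime_dvd_left (hdvd i)).coprime_dvd_right (hdvd j)]

theorem SG_pi [∀ i, Finite (M i)]
    (hM : Pairwise fun i j ↦ (Monoid.exponent (M i)).Coprime (Monoid.exponent (M j))) :
    SG (∀ i, M i) = ∏ i, SG (M i) := by
  classical
  have (i : ι) : Fintype (Subgroup (M i)) := Fintype.ofFinite _
  calc SG (∀ i, M i) = ∑ᶠ H : ∀ i, Subgroup (M i), ∏ i, phiG (H i) :=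
        (finsum_eq_of_bijective (subgroupPiEquiv hM) (subgroupPiEquiv hM).bijective fun H ↦
          (phiG_subgroup_pi hM H).symm).symm
    _ = ∏ i, ∑ H : Subgroup (M i), phiG H := by
        rw [finsum_eq_sum_of_fintype, Fintype.prod_sum]
    _ = ∏ i, SG (M i) := by simp only [SG, finsum_eq_sum_of_fintype]

end ProductSubgroups

theorem coprime_exponent_of_isPGroup {G H : Type*} [Group G] [Group H] [Finite G] [Finite H]
    {p q : ℕ} [Fact p.Prime] [Fact q.Prime] (hpq : p ≠ q) (hG : IsPGroup p G)
    (hH : IsPGroup q H) : (Monoid.exponent G).Coprime (Monoid.exponent H) := by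
  obtain ⟨m, hm⟩ := IsPGroup.iff_card.1 hG
  obtain ⟨n, hn⟩ := IsPGroup.iff_card.1 hH
  have hcard : (Nat.card G).Coprime (Nat.card H) := by
    rw [hm, hn]
    exact Nat.coprime_pow_primes m n Fact.out Fact.out hpq
  exact (hcard.coprime_dvd_left Group.exponent_dvd_nat_card).coprime_dvd_right
    Group.exponent_dvd_nat_card

section Sylow

variable {G : Type*} [Group G] [Finite G]

theorem pairwise_coprime_exponent_sylow (P : (p : (Nat.card G).primeFactors) → Sylow p G) :
    Pairwise fun p q ↦ (Monoid.exponent (P p)).Coprime (Monoid.exponent (P q)) := by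
  intro p q hpq
  have := Fact.mk (Nat.prime_of_mem_primeFactors p.2)
  have := Fact.mk (Nat.prime_of_mem_primeFactors q.2)
  exact coprime_exponent_of_isPGroup (Subtype.coe_ne_coe.2 hpq) (P p).isPGroup' (P q).isPGroup'

/-- A finite nilpotent group is isomorphic to the product of its Sylow subgroups. In contrast to
`Sylow.directProductOfNormal`, the product has one factor for each prime, chosen by `P`. -/
noncomputable def mulEquivPiSylow [Group.IsNilpotent G]
    (P : (p : (Nat.card G).primeFactors) → Sylow p G) : G ≃* ∀ p, P p :=
  (Sylow.directProductOfNormal fun _ ↦ inferInstance).symm.trans <|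
    MulEquiv.piCongrRight fun p ↦
      have := Fact.mk (Nat.prime_of_mem_primeFactors p.2)
      have := (Sylow.unique_of_normal (P p) inferInstance).instSubsingleton
      letI := uniqueOfSubsingleton (P p)
      MulEquiv.piUnique fun Q : Sylow p G ↦ Q

end Sylow

theorem stmt_1 (G : Type*) [Group G] [Fintype G] [Group.IsNilpotent G]
    (P : (p : (Nat.card G).primeFactors) → Sylow p G) :
    SG G = ∏ p : (Nat.card G).primeFactors, SG (P p) := by
  calc SG G = SG (∀ p, P p) := SG_congr (mulEquivPiSylow P)
    _ = ∏ p, SG (P p) := SG_pi (pairwise_coprime_exponent_sylow P)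
end

section
/- Let $n \geq 2$ and let $D_{2n}$ be the dihedral group of order $2n$. Then $S(D_{2n}) = 2n$ if and only if $n$ is odd. -/
/-! Every element of a finite group `G` generates exactly one cyclic subgroup, and the generators of
a finite cyclic group are its elements of order the exponent, so the cyclic subgroups contribute
exactly `|G|` to `S(G)`. Thus `S(G) = |G|` iff no noncyclic subgroup contains an element whose order
is the exponent of the subgroup. A `p`-group always contains such an element, so then all Sylow
subgroups are cyclic; conversely, if all Sylow subgroups of `G` are cyclic, every subgroup `H` has
exponent `|H|`, and an element of that order makes `H` cyclic. For the dihedral group of order `2n`,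
whose exponent is `lcm(n, 2)`, the condition amounts to `lcm(n, 2) = 2n`. -/

lemma orderOf_eq_exponent_iff_zpowers_eq {G : Type*} [Group G] {H : Subgroup G} [Finite H]
    [IsCyclic H] (a : H) :
    orderOf a = Monoid.exponent H ↔ Subgroup.zpowers (a : G) = H := by
  rw [IsCyclic.exponent_eq_card, ← Subgroup.orderOf_coe, ← Nat.card_zpowers]
  exact ⟨fun h ↦ Subgroup.eq_of_le_of_card_ge (Subgroup.zpowers_le.2 a.2) h.ge,
    fun h ↦ by rw [h]⟩

lemma phiG_eq_card_zpowers_eq {G : Type*} [Group G] (H : Subgroup G) [Finite H] [IsCyclic H] :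
    phiG H = Nat.card {a : G // Subgroup.zpowers a = H} := by
  have mem_of_zpowers_eq {a : G} (ha : Subgroup.zpowers a = H) : a ∈ H :=
    ha ▸ Subgroup.mem_zpowers a
  simp only [phiG, orderOf_eq_exponent_iff_zpowers_eq]
  exact Nat.card_congr (Equiv.subtypeSubtypeEquivSubtype (p := (· ∈ H)) mem_of_zpowers_eq)

lemma sum_phiG_isCyclic (G : Type*) [Group G] [Finite G] [Fintype (Subgroup G)]
    [DecidablePred fun H : Subgroup G ↦ IsCyclic H] :
    ∑ H ∈ {H : Subgroup G | IsCyclic H}, phiG H = Nat.card G := by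
  rw [Nat.card_congr (Equiv.sigmaFiberEquiv (Subgroup.zpowers (G := G))).symm, Nat.card_sigma,
    Finset.sum_filter]
  refine Finset.sum_congr rfl fun H _ ↦ ?_
  split_ifs with hH
  · exact phiG_eq_card_zpowers_eq H
  · have : IsEmpty {a : G // Subgroup.zpowers a = H} :=
      ⟨fun ⟨a, ha⟩ ↦ hH (H.isCyclic_iff_exists_zpowers_eq_top.2 ⟨a, ha⟩)⟩
    exact Nat.card_of_isEmpty.symm

lemma SG_eq_card_iff_forall_not_isCyclic (G : Type*) [Group G] [Finite G] :
    SG G = Nat.card G ↔ ∀ H : Subgroup G, ¬ IsCyclic H → phiG H = 0 := by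
  classical
  have := Fintype.ofFinite (Subgroup G)
  rw [SG, finsum_eq_sum_of_fintype,
    ← Finset.sum_filter_add_sum_filter_not Finset.univ (fun H : Subgroup G ↦ IsCyclic H),
    sum_phiG_isCyclic, Nat.add_eq_left, Finset.sum_eq_zero_iff]
  simp only [Finset.mem_filter_univ]

lemma phiG_ne_zero_of_isPGroup {G : Type*} [Group G] [Finite G] {p : ℕ} [hp : Fact p.Prime]
    (hG : IsPGroup p G) : phiG G ≠ 0 := by
  obtain ⟨k, hk⟩ := hG.exists_exponent_eq_pow
  obtain ⟨a, ha⟩ := hp.out.exists_orderOf_eq_pow_factorization_exponent G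
  have : Nonempty {a : G // orderOf a = Monoid.exponent G} :=
    ⟨a, by rw [ha, hk, hp.out.factorization_pow, Finsupp.single_eq_same]⟩
  exact Nat.card_pos.ne'

lemma phiG_eq_zero_of_isZGroup (G : Type*) [Group G] [Finite G] [IsZGroup G]
    (hG : ¬ IsCyclic G) : phiG G = 0 := by
  have : IsEmpty {a : G // orderOf a = Monoid.exponent G} :=
    ⟨fun ⟨a, ha⟩ ↦ hG <| isCyclic_of_orderOf_eq_card a <| ha.trans (IsZGroup.exponent_eq_card G)⟩
  exact Nat.card_of_isEmpty

theorem SG_eq_card_iff_isZGroup (G : Type*) [Group G] [Finite G] :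
    SG G = Nat.card G ↔ IsZGroup G := by
  rw [SG_eq_card_iff_forall_not_isCyclic]
  refine ⟨fun h ↦ ⟨fun p hp P ↦ ?_⟩, fun _ H ↦ phiG_eq_zero_of_isZGroup H⟩
  have : Fact p.Prime := ⟨hp⟩
  exact not_imp_comm.1 (h P) (phiG_ne_zero_of_isPGroup P.isPGroup')

lemma isZGroup_iff_exponent_eq_card (G : Type*) [Group G] [Finite G] :
    IsZGroup G ↔ Monoid.exponent G = Nat.card G := by
  refine ⟨fun _ ↦ IsZGroup.exponent_eq_card G, fun h ↦ ⟨fun p hp P ↦ ?_⟩⟩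
  have : Fact p.Prime := ⟨hp⟩
  obtain ⟨a, ha⟩ := hp.exists_orderOf_eq_pow_factorization_exponent G
  let Q : Sylow p G := Sylow.ofCard (Subgroup.zpowers a) (by rw [Nat.card_zpowers, ha, h])
  have : IsCyclic Q := inferInstanceAs (IsCyclic (Subgroup.zpowers a))
  exact isCyclic_of_surjective (Q.equiv P) (Q.equiv P).surjective

lemma isZGroup_dihedralGroup_iff (n : ℕ) [NeZero n] : IsZGroup (DihedralGroup n) ↔ Odd n := by
  rw [isZGroup_iff_exponent_eq_card, DihedralGroup.exponent, DihedralGroup.nat_card, mul_comm 2 n,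
    lcm_eq_nat_lcm, Nat.lcm_eq_mul_iff, ← Nat.coprime_iff_gcd_eq_one, Nat.coprime_two_right]
  simp only [NeZero.ne n, OfNat.ofNat_ne_zero, false_or]

theorem stmt_12 (n : ℕ) (hn : 2 ≤ n) :
    SG (DihedralGroup n) = 2 * n ↔ Odd n := by
  have : NeZero n := ⟨by lia⟩
  rw [← DihedralGroup.nat_card, SG_eq_card_iff_isZGroup, isZGroup_dihedralGroup_iff]
end

section
/- Let $G$ be a finite non-abelian group with a normal Hall subgroup $N$ that is cyclic of order $n$, and suppose $N$ has a complement $H$ in $G$ of prime order $p$ (so $|G| = np$ with $\gcd(n,p)=1$) such that the centralizer $C_N(H)$ is trivial. Then $S(G) = |G|$ if and only if the number of complements of $N$ in $G$ equals $n$. -/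
/-!
In a finite Z-group (all Sylow subgroups cyclic) the exponent of a subgroup `K` is its order, so
the elements counted by `phiG K` are exactly the generators of `K`; every element of the group
generates exactly one subgroup, whence `SG G = |G|`. Complements of an abelian normal Hall subgroup
`N` are conjugate under `N` (Schur–Zassenhaus) and `N ∩ N_G(H) = C_N(H)`, so by orbit–stabilizer
their number is `|N : C_N(H)|`. Thus both sides of the equivalence hold: the first because an
extension of Z-groups of coprime orders is a Z-group, the second because `C_N(H)` is trivial.
-/

section ZGroup

variable {G : Type*} [Group G]

theorem zpowers_coe_eq_iff_orderOf_eq_card (K : Subgroup G) [Finite K] (a : K) :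
    Subgroup.zpowers (a : G) = K ↔ orderOf a = Nat.card K := by
  rw [← Subgroup.orderOf_coe, ← Nat.card_zpowers]
  refine ⟨fun h => by rw [h], fun h => ?_⟩
  exact Subgroup.eq_of_le_of_card_ge (Subgroup.zpowers_le.2 a.2) h.ge

theorem phiG_eq_card_generators (K : Subgroup G) [Finite K] [IsZGroup K] :
    phiG K = Nat.card {g : G // Subgroup.zpowers g = K} := by
  have mem_of_zpowers_eq (g : G) (hg : Subgroup.zpowers g = K) : g ∈ K :=
    hg ▸ Subgroup.mem_zpowers g
  rw [phiG, IsZGroup.exponent_eq_card]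
  simp_rw [← zpowers_coe_eq_iff_orderOf_eq_card]
  exact Nat.card_congr (Equiv.subtypeSubtypeEquivSubtype (mem_of_zpowers_eq _))

theorem SG_eq_card_of_isZGroup [Finite G] [IsZGroup G] : SG G = Nat.card G := by
  have := Fintype.ofFinite (Subgroup G)
  calc SG G = ∑ K : Subgroup G, Nat.card {g : G // Subgroup.zpowers g = K} := by
        simp_rw [SG, finsum_eq_sum_of_fintype, phiG_eq_card_generators]
    _ = Nat.card (Σ K : Subgroup G, {g : G // Subgroup.zpowers g = K}) := Nat.card_sigma.symm
    _ = Nat.card G := Nat.card_congr (Equiv.sigmaFiberEquiv Subgroup.zpowers)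

end ZGroup

section Complements

open scoped Pointwise
open MulAction Subgroup

variable {G : Type*} [Group G] {N H K : Subgroup G}

theorem isComplement'_iff_card_eq_index [Finite G] (hN : (Nat.card N).Coprime N.index) :
    N.IsComplement' K ↔ Nat.card K = N.index := by
  refine ⟨fun h => h.symm.index_eq_card.symm, fun h => ?_⟩
  exact isComplement'_of_coprime (by rw [h, N.card_mul_index]) (by rwa [h])

theorem isZGroup_of_isComplement' [Finite G] [N.Normal] [IsZGroup N] [IsZGroup H]
    (hN : (Nat.card N).Coprime N.index) (hH : N.IsComplement' H) : IsZGroup G := by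
  let e : G ⧸ N ≃* H := hH.symm.QuotientMulEquiv
  have : IsZGroup (G ⧸ N) := .of_injective (f := e.toMonoidHom) e.injective
  exact isZGroup_of_coprime (f := N.subtype) (f' := QuotientGroup.mk' N)
    (by rw [QuotientGroup.ker_mk', range_subtype]) hN

theorem inf_normalizer_eq_inf_centralizer_of_disjoint [N.Normal] (h : Disjoint N H) :
    N ⊓ normalizer (H : Set G) = N ⊓ centralizer (H : Set G) := by
  refine le_antisymm (le_inf inf_le_left ?_) (inf_le_inf_left N (centralizer_le_normalizer _))
  rw [← commutator_eq_bot_iff_le_centralizer, eq_bot_iff, ← h.eq_bot]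
  refine le_inf ((commutator_mono inf_le_left le_rfl).trans (commutator_le_left N H)) ?_
  exact le_normalizer_iff_commutator_le_right.1 inf_le_right

theorem exists_stabilizer_quotientDiff_eq [Finite G] [N.Normal] [IsMulCommutative N]
    (hN : (Nat.card N).Coprime N.index) (hK : N.IsComplement' K) :
    ∃ α : N.QuotientDiff, stabilizer G α = K := by
  let T : N.LeftTransversal := ⟨K, hK.symm⟩
  let α : N.QuotientDiff := Quotient.mk'' T
  have le_stabilizer : K ≤ stabilizer G α := fun k hk =>
    -- `k` acts on left transversals by right multiplication by `k⁻¹`, which fixes the set `K`.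
    congrArg Quotient.mk'' (Subtype.ext (op_smul_coe_set (K.inv_mem hk)))
  refine ⟨α, (eq_of_le_of_card_ge le_stabilizer ?_).symm⟩
  rw [(isComplement'_iff_card_eq_index hN).1 hK,
    (isComplement'_iff_card_eq_index hN).1 (isComplement'_stabilizer_of_coprime hN)]

theorem exists_conj_smul_eq_of_isComplement' [Finite G] [N.Normal] [IsMulCommutative N]
    (hN : (Nat.card N).Coprime N.index) (hH : N.IsComplement' H) (hK : N.IsComplement' K) :
    ∃ a : N, MulAut.conj (a : G) • H = K := by
  obtain ⟨α, rfl⟩ := exists_stabilizer_quotientDiff_eq hN hH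
  obtain ⟨β, rfl⟩ := exists_stabilizer_quotientDiff_eq hN hK
  obtain ⟨a, rfl⟩ := exists_smul_eq hN α β
  exact ⟨a, (stabilizer_smul_eq_stabilizer_map_conj (a : G) α).symm⟩

theorem card_isComplement'_eq_relIndex_centralizer [Finite G] [N.Normal] [IsMulCommutative N]
    (hN : (Nat.card N).Coprime N.index) (hH : N.IsComplement' H) :
    Nat.card {K : Subgroup G // N.IsComplement' K} = (centralizer (H : Set G)).relIndex N := by
  let _ : MulAction N (Subgroup G) := .compHom _ (MulAut.conj.comp N.subtype)
  have orbit_eq : orbit N H = {K : Subgroup G | N.IsComplement' K} := by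
    refine Set.Subset.antisymm ?_ fun K hK => exists_conj_smul_eq_of_isComplement' hN hH hK
    rintro _ ⟨a, rfl⟩
    refine (isComplement'_iff_card_eq_index hN).2 ?_
    rw [← (isComplement'_iff_card_eq_index hN).1 hH]
    exact Nat.card_congr (equivSMul (MulAut.conj (a : G)) H).symm.toEquiv
  have stabilizer_eq : stabilizer N H = (normalizer (H : Set G)).subgroupOf N :=
    Subgroup.ext fun a => mem_normalizer_iff_map_conj_eq.symm
  calc Nat.card {K : Subgroup G // N.IsComplement' K} = (orbit N H).ncard := by
        rw [orbit_eq, ← Nat.card_coe_set_eq, Set.coe_ofPred]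
    _ = (normalizer (H : Set G)).relIndex N := by rw [← index_stabilizer, stabilizer_eq, relIndex]
    _ = (centralizer (H : Set G)).relIndex N := by
        rw [← inf_relIndex_left, inf_normalizer_eq_inf_centralizer_of_disjoint hH.disjoint,
          inf_relIndex_left]

end Complements

theorem stmt_15_general {G : Type*} [Group G] [Finite G] {N H : Subgroup G} [N.Normal] [IsCyclic N]
    [IsZGroup H] (hN : (Nat.card N).Coprime N.index) (hH : N.IsComplement' H)
    (hcent : N ⊓ Subgroup.centralizer (H : Set G) = ⊥) :
    SG G = Nat.card G ∧ Nat.card {K : Subgroup G // N.IsComplement' K} = Nat.card N := by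
  have : IsZGroup G := isZGroup_of_isComplement' hN hH
  refine ⟨SG_eq_card_of_isZGroup, ?_⟩
  rw [card_isComplement'_eq_relIndex_centralizer hN hH, ← Subgroup.inf_relIndex_left, hcent,
    Subgroup.relIndex_bot_left]

theorem stmt_15 (G : Type*) [Group G] [Fintype G]
    (hna : ¬ ∀ a b : G, a * b = b * a)
    (N : Subgroup G) [N.Normal] (hNcyc : IsCyclic N)
    (n : ℕ) (hn : Nat.card N = n)
    (hHall : Nat.Coprime (Nat.card N) N.index)
    (p : ℕ) (hp : p.Prime)
    (H : Subgroup G) (hcomp : N.IsComplement' H) (hH : Nat.card H = p)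
    (hcent : N ⊓ Subgroup.centralizer (H : Set G) = ⊥) :
    SG G = Nat.card G ↔ Nat.card {K : Subgroup G // N.IsComplement' K} = n := by
  have : Fact p.Prime := ⟨hp⟩
  have : IsCyclic H := isCyclic_of_prime_card hH
  obtain ⟨hSG, hcard⟩ := stmt_15_general hHall hcomp hcent
  exact iff_of_true hSG (hcard.trans hn)
end
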